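/- arXiv:2409.08802 — 4 statements merged into one kernel-verified Lean document; each statement's English description precedes it below -/
import Mathlib

section
/- Let A, B be symmetric n×n real matrices. Suppose there are vectors u^{(ij)}, v^{(kl)} ∈ ℝⁿ for all i,j,k,l ∈ [n] satisfying: (1) u^{(ij)}_k + u^{(ij)}_l + v^{(kl)}_i + v^{(kl)}_j ≤ A_{ij}B_{kl} whenever (i ≠ j and k ≠ l) or (i = j and k = l); (2) u^{(ij)}_i + u^{(ij)}_j + v^{(ij)}_i + v^{(ij)}_j = A_{ij}B_{ij} for all i,j; (3) for every permutation σ of [n], Σ_{i,j} (u^{(ij)}_{σ(i)} + u^{(ij)}_{σ(j)} + v^{(ij)}_{σ⁻¹(i)} + v^{(ij)}_{σ⁻¹(j)}) ≥ Σ_{i,j} A_{ij}B_{ij}. Then (I, vec(I)vec(I)ᵀ) is an optimal solution to the SDP relaxation: it is feasible, and every feasible pair (X, 𝐗) satisfies ⟨A⊗B, 𝐗⟩ ≥ Σ_{i,j} A_{ij}B_{ij} = ⟨A⊗B, vec(I)vec(I)ᵀ⟩. -/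
open Matrix BigOperators

noncomputable section

/-- `vec(X)` indexed by pairs `(i,k)` with `vec(X)_(i,k) = X i k`. -/
def vecM {n : ℕ} (X : Matrix (Fin n) (Fin n) ℝ) : Fin n × Fin n → ℝ :=
  fun p => X p.1 p.2

/-- Kronecker product indexed so that `(A ⊗ B) (i,k) (j,l) = A i j * B k l`. -/
def kron {n : ℕ} (A B : Matrix (Fin n) (Fin n) ℝ) :
    Matrix (Fin n × Fin n) (Fin n × Fin n) ℝ :=
  Matrix.of fun p q => A p.1 q.1 * B p.2 q.2

/-- The all-ones `n × n` matrix. -/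
def Eall (n : ℕ) : Matrix (Fin n) (Fin n) ℝ :=
  Matrix.of fun _ _ => (1 : ℝ)

/-- `X` is doubly stochastic. -/
def DS {n : ℕ} (X : Matrix (Fin n) (Fin n) ℝ) : Prop :=
  (∀ i, ∑ j, X i j = 1) ∧ (∀ j, ∑ i, X i j = 1) ∧ (∀ i j, 0 ≤ X i j)

/-- Feasibility of the pair `(X, Y)` for the SDP relaxation of the QAP. -/
def SDPFeasible {n : ℕ} (X : Matrix (Fin n) (Fin n) ℝ)
    (Y : Matrix (Fin n × Fin n) (Fin n × Fin n) ℝ) : Prop :=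
  (Y - vecMulVec (vecM X) (vecM X)).PosSemidef ∧
  (∀ k l, ∑ i, ∑ j, Y (i, k) (j, l) = 1) ∧
  (∀ k l, ∑ i, ∑ j, Y (k, i) (l, j) = 1) ∧
  (∀ k i j, i ≠ j → Y (i, k) (j, k) = 0) ∧
  (∀ k i j, i ≠ j → Y (k, i) (k, j) = 0) ∧
  (∀ p q, 0 ≤ Y p q) ∧
  DS X

/-- The SDP objective `⟨A ⊗ B, Y⟩`. -/
def sdpObj {n : ℕ} (A B : Matrix (Fin n) (Fin n) ℝ)
    (Y : Matrix (Fin n × Fin n) (Fin n × Fin n) ℝ) : ℝ :=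
  ∑ p, ∑ q, kron A B p q * Y p q

/-- The set `𝒮`: closure of matrices `Y` such that `G⊗E + E⊗H + Y` is PSD for some `G, H`. -/
def Scone (n : ℕ) : Set (Matrix (Fin n × Fin n) (Fin n × Fin n) ℝ) :=
  closure {Y | ∃ G H : Matrix (Fin n) (Fin n) ℝ,
    (kron G (Eall n) + kron (Eall n) H + Y).PosSemidef}

/-- The set `𝒯`. -/
def Tcone (n : ℕ) : Set (Matrix (Fin n × Fin n) (Fin n × Fin n) ℝ) :=
  {Y | ∀ X : Matrix (Fin n) (Fin n) ℝ, DS X →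
    ∑ p, ∑ q, vecM X p * Y p q * vecM X q ≥
      ∑ p, ∑ q, vecM (1 : Matrix (Fin n) (Fin n) ℝ) p * Y p q *
        vecM (1 : Matrix (Fin n) (Fin n) ℝ) q}

/-!
Positive semidefiniteness of `Y - vec(X)vec(X)ᵀ` together with the normalisation of the block sums
of `Y` forces the marginals of `Y` to be `X`: an indicator vector `w` of a row or column satisfies
`⟨w, (Y - vec(X)vec(X)ᵀ) w⟩ = 0`, hence `Y w = vec(X)`. Consequently the certificate, which bounds
the cost from below on the support of `Y`, pairs with `Y` to a linear functional of the doubly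
stochastic matrix `X` alone, and by Birkhoff's theorem such a functional is minimised at a
permutation matrix.
-/

theorem isHermitian_vecMulVec_self_star {R ι : Type*} [Mul R] [StarMul R] (x : ι → R) :
    (vecMulVec x (star x)).IsHermitian := by
  rw [IsHermitian, conjTranspose_vecMulVec, star_star]

open scoped ComplexOrder in
theorem mulVec_eq_smul_of_posSemidef_sub_vecMulVec {𝕜 ι : Type*} [RCLike 𝕜] [Fintype ι]
    {Y : Matrix ι ι 𝕜} {x w : ι → 𝕜}
    (h : (Y - vecMulVec x (star x)).PosSemidef)
    (hw : star w ⬝ᵥ Y *ᵥ w = (star w ⬝ᵥ x) * (star x ⬝ᵥ w)) :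
    Y *ᵥ w = (star x ⬝ᵥ w) • x := by
  have apply_w : (Y - vecMulVec x (star x)) *ᵥ w = Y *ᵥ w - (star x ⬝ᵥ w) • x := by
    rw [sub_mulVec, vecMulVec_mulVec, op_smul_eq_smul]
  have isotropic : star w ⬝ᵥ (Y - vecMulVec x (star x)) *ᵥ w = 0 := by
    rw [apply_w, dotProduct_sub, dotProduct_smul, hw, smul_eq_mul, mul_comm, sub_self]
  exact sub_eq_zero.1 (apply_w ▸ (h.dotProduct_mulVec_zero_iff w).1 isotropic)

theorem le_sum_mul_of_mem_doublyStochastic {R ι : Type*} [Field R] [LinearOrder R]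
    [IsStrictOrderedRing R] [Fintype ι] [DecidableEq ι] {C X : Matrix ι ι R} {c : R}
    (hX : X ∈ doublyStochastic R ι) (hC : ∀ σ : Equiv.Perm ι, c ≤ ∑ i, C i (σ i)) :
    c ≤ ∑ i, ∑ k, C i k * X i k := by
  have linear : IsLinearMap R fun M : Matrix ι ι R ↦ ∑ i, ∑ k, C i k * M i k :=
    ⟨by simp [mul_add, Finset.sum_add_distrib], by simp [Finset.mul_sum, mul_left_comm]⟩
  rw [← SetLike.mem_coe, doublyStochastic_eq_convexHull_permMatrix] at hX
  refine convexHull_min ?_ (convex_halfSpace_ge linear c) hX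
  rintro _ ⟨σ, rfl⟩
  simpa [PEquiv.toMatrix_apply] using hC σ

section Certificate

variable {R ι κ : Type*} [Semiring R]

/-- The part `u^{(ij)}_k + u^{(ij)}_l` of the dual certificate coming from one of the two families
of vectors, as a matrix indexed by the pairs `(i,k)`, `(j,l)`. -/
def certBlock (u : ι → ι → κ → R) : Matrix (ι × κ) (ι × κ) R :=
  of fun p q ↦ u p.1 q.1 p.2 + u p.1 q.1 q.2

/-- The linear assignment cost which pairs with `X` as `certBlock u` pairs with any symmetric matrix
whose marginals are `X`. -/
def certBlockCost [Fintype ι] (u : ι → ι → κ → R) : Matrix ι κ R :=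
  of fun i k ↦ ∑ j, (u i j k + u j i k)

/-- The dual certificate `u^{(ij)}_k + u^{(ij)}_l + v^{(kl)}_i + v^{(kl)}_j`, as a matrix indexed by
the pairs `(i,k)`, `(j,l)`. The roles of the two coordinates are interchanged in the second block,
which is therefore pulled back along `Prod.swap`. -/
def certMatrix (u : ι → ι → κ → R) (v : κ → κ → ι → R) : Matrix (ι × κ) (ι × κ) R :=
  certBlock u + (certBlock v).submatrix Prod.swap Prod.swap

/-- The linear assignment cost induced by the dual certificate `certMatrix u v`. -/
def certCost [Fintype ι] [Fintype κ] (u : ι → ι → κ → R) (v : κ → κ → ι → R) : Matrix ι κ R :=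
  certBlockCost u + (certBlockCost v)ᵀ

theorem sum_certBlock_mul [Fintype ι] [Fintype κ] {X : Matrix ι κ R}
    {Y : Matrix (ι × κ) (ι × κ) R} (hY : Y.IsSymm)
    (marginal : ∀ i k j, ∑ l, Y (i, k) (j, l) = X i k) (u : ι → ι → κ → R) :
    ∑ p, ∑ q, certBlock u p q * Y p q = ∑ i, ∑ k, certBlockCost u i k * X i k := by
  have left : ∑ p : ι × κ, ∑ q : ι × κ, u p.1 q.1 p.2 * Y p q =
      ∑ i, ∑ k, ∑ j, u i j k * X i k := by
    simp only [Fintype.sum_prod_type, ← Finset.mul_sum, marginal]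
  have right : ∑ p : ι × κ, ∑ q : ι × κ, u p.1 q.1 q.2 * Y p q =
      ∑ i, ∑ k, ∑ j, u j i k * X i k := by
    rw [Finset.sum_comm]
    simp only [← hY.apply, Fintype.sum_prod_type, ← Finset.mul_sum, marginal]
  simp only [certBlock, certBlockCost, of_apply, add_mul, Finset.sum_mul, Finset.sum_add_distrib,
    left, right]

theorem sum_certBlockCost_apply_perm [Fintype ι] (u : ι → ι → ι → R) (σ : Equiv.Perm ι) :
    ∑ i, certBlockCost u i (σ i) = ∑ i, ∑ j, (u i j (σ i) + u i j (σ j)) := by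
  simp only [certBlockCost, of_apply, Finset.sum_add_distrib]
  rw [Finset.sum_comm (f := fun i j ↦ u j i (σ i))]

theorem sum_certCost_apply_perm [Fintype ι] (u v : ι → ι → ι → R) (σ : Equiv.Perm ι) :
    ∑ i, certCost u v i (σ i) =
      ∑ i, ∑ j, (u i j (σ i) + u i j (σ j) + v i j (σ⁻¹ i) + v i j (σ⁻¹ j)) := by
  have reindex : ∑ i, certBlockCost v (σ i) i = ∑ i, certBlockCost v i (σ⁻¹ i) := by
    simpa using Equiv.sum_comp σ fun i ↦ certBlockCost v i (σ⁻¹ i)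
  simp only [certCost, Matrix.add_apply, transpose_apply, Finset.sum_add_distrib, reindex,
    sum_certBlockCost_apply_perm, add_assoc]

end Certificate

section Relaxation

variable {n : ℕ} {X : Matrix (Fin n) (Fin n) ℝ} {Y : Matrix (Fin n × Fin n) (Fin n × Fin n) ℝ}

theorem ds_iff_mem_doublyStochastic : DS X ↔ X ∈ doublyStochastic ℝ (Fin n) := by
  rw [mem_doublyStochastic_iff_sum, DS]
  tauto

theorem sdpFeasible_permMatrix (σ : Equiv.Perm (Fin n)) :
    SDPFeasible (σ.permMatrix ℝ)
      (vecMulVec (vecM (σ.permMatrix ℝ)) (vecM (σ.permMatrix ℝ))) := by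
  have ds : DS (σ.permMatrix ℝ) := ds_iff_mem_doublyStochastic.2 permMatrix_mem_doublyStochastic
  have ⟨row_sum, col_sum, nonneg⟩ := ds
  refine ⟨?_, fun k l ↦ ?_, fun k l ↦ ?_, fun k i j hij ↦ ?_, fun k i j hij ↦ ?_,
    fun p q ↦ mul_nonneg (nonneg _ _) (nonneg _ _), ds⟩
  · rw [sub_self]
    exact PosSemidef.zero
  · simp only [vecMulVec_apply, vecM, ← Finset.sum_mul_sum, col_sum, mul_one]
  · simp only [vecMulVec_apply, vecM, ← Finset.sum_mul_sum, row_sum, mul_one]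
  · have σ_ne : σ i ≠ σ j := σ.injective.ne hij
    simp only [vecMulVec_apply, vecM, PEquiv.toMatrix_apply, Equiv.toPEquiv_apply]
    grind
  · simp only [vecMulVec_apply, vecM, PEquiv.toMatrix_apply, Equiv.toPEquiv_apply]
    grind

theorem sum_mul_vecMulVec_vecM_permMatrix (C : Matrix (Fin n × Fin n) (Fin n × Fin n) ℝ)
    (σ : Equiv.Perm (Fin n)) :
    ∑ p, ∑ q, C p q * vecMulVec (vecM (σ.permMatrix ℝ)) (vecM (σ.permMatrix ℝ)) p q =
      ∑ i, ∑ j, C (i, σ i) (j, σ j) := by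
  simp [vecMulVec_apply, vecM, PEquiv.toMatrix_apply, Fintype.sum_prod_type]

namespace SDPFeasible

theorem isSymm (h : SDPFeasible X Y) : Y.IsSymm := by
  simpa using
    h.1.isHermitian.add (isHermitian_vecMulVec_self_star (vecM X))

theorem transpose (h : SDPFeasible X Y) :
    SDPFeasible Xᵀ (Y.submatrix Prod.swap Prod.swap) := by
  obtain ⟨psd, col_sum, row_sum, col_zero, row_zero, nonneg, row_ds, col_ds, X_nonneg⟩ := h
  exact ⟨psd.submatrix Prod.swap, row_sum, col_sum, row_zero, col_zero, fun p q ↦ nonneg _ _,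
    col_ds, row_ds, fun i j ↦ X_nonneg j i⟩

theorem sum_snd_eq (h : SDPFeasible X Y) (i k j : Fin n) : ∑ l, Y (i, k) (j, l) = X i k := by
  obtain ⟨psd, -, row_sum, -, -, -, row_ds, -⟩ := h
  let w : Fin n × Fin n → ℝ := fun p ↦ if p.1 = j then 1 else 0
  have pair_w : vecM X ⬝ᵥ w = 1 := by
    simp [w, dotProduct, vecM, Fintype.sum_prod_type_right, row_ds]
  have form_w : w ⬝ᵥ Y *ᵥ w = 1 := by
    simpa [w, dotProduct, mulVec, Fintype.sum_prod_type_right] using row_sum j j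
  have Y_w : Y *ᵥ w = vecM X := by
    simpa [pair_w] using mulVec_eq_smul_of_posSemidef_sub_vecMulVec (x := vecM X) (w := w) psd
      (by simp only [star_trivial, form_w, dotProduct_comm w, pair_w, mul_one])
  simpa [w, dotProduct, mulVec, Fintype.sum_prod_type_right, vecM] using congrFun Y_w (i, k)

theorem apply_eq_zero (h : SDPFeasible X Y) {p q : Fin n × Fin n}
    (hpq : ¬(p.1 = q.1 ↔ p.2 = q.2)) : Y p q = 0 := by
  obtain ⟨-, -, -, col_zero, row_zero, -⟩ := h
  obtain ⟨i, k⟩ := p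
  obtain ⟨j, l⟩ := q
  grind

theorem sum_mul_le_sum_mul (h : SDPFeasible X Y)
    {M C : Matrix (Fin n × Fin n) (Fin n × Fin n) ℝ}
    (hMC : ∀ p q, (p.1 = q.1 ↔ p.2 = q.2) → M p q ≤ C p q) :
    ∑ p, ∑ q, M p q * Y p q ≤ ∑ p, ∑ q, C p q * Y p q := by
  refine Finset.sum_le_sum fun p _ ↦ Finset.sum_le_sum fun q _ ↦ ?_
  by_cases hpq : p.1 = q.1 ↔ p.2 = q.2
  · exact mul_le_mul_of_nonneg_right (hMC p q hpq) (h.2.2.2.2.2.1 p q)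
  · simp only [h.apply_eq_zero hpq, mul_zero, le_refl]

theorem sum_certMatrix_mul (h : SDPFeasible X Y) (u v : Fin n → Fin n → Fin n → ℝ) :
    ∑ p, ∑ q, certMatrix u v p q * Y p q = ∑ i, ∑ k, certCost u v i k * X i k := by
  have swapped : ∑ p, ∑ q, (certBlock v).submatrix Prod.swap Prod.swap p q * Y p q =
      ∑ i, ∑ k, (certBlockCost v)ᵀ i k * X i k := calc
    _ = ∑ p, ∑ q, certBlock v p q * Y.submatrix Prod.swap Prod.swap p q :=
      Fintype.sum_equiv (Equiv.prodComm _ _) _ _ fun p ↦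
        Fintype.sum_equiv (Equiv.prodComm _ _) _ _ fun q ↦ rfl
    _ = ∑ k, ∑ i, certBlockCost v k i * Xᵀ k i :=
      sum_certBlock_mul h.transpose.isSymm h.transpose.sum_snd_eq v
    _ = _ := Finset.sum_comm
  simp only [certMatrix, certCost, Matrix.add_apply, add_mul, Finset.sum_add_distrib, swapped,
    sum_certBlock_mul h.isSymm h.sum_snd_eq u]

theorem le_sum_mul_of_certMatrix_le (h : SDPFeasible X Y) {u v : Fin n → Fin n → Fin n → ℝ}
    {C : Matrix (Fin n × Fin n) (Fin n × Fin n) ℝ} {c : ℝ}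
    (hC : ∀ p q, (p.1 = q.1 ↔ p.2 = q.2) → certMatrix u v p q ≤ C p q)
    (hc : ∀ σ : Equiv.Perm (Fin n), c ≤ ∑ i, certCost u v i (σ i)) :
    c ≤ ∑ p, ∑ q, C p q * Y p q := calc
  c ≤ ∑ i, ∑ k, certCost u v i k * X i k :=
    le_sum_mul_of_mem_doublyStochastic (ds_iff_mem_doublyStochastic.1 h.2.2.2.2.2.2) hc
  _ = ∑ p, ∑ q, certMatrix u v p q * Y p q := (h.sum_certMatrix_mul u v).symm
  _ ≤ ∑ p, ∑ q, C p q * Y p q := h.sum_mul_le_sum_mul hC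

end SDPFeasible

/-- The Koopmans–Beckmann cost `A ⊗ B` is replaced by an arbitrary (Lawler) quadratic cost `C`. -/
theorem stmt0_general (C : Matrix (Fin n × Fin n) (Fin n × Fin n) ℝ)
    (u v : Fin n → Fin n → Fin n → ℝ)
    (cert_bound : ∀ i j k l, ((i ≠ j ∧ k ≠ l) ∨ (i = j ∧ k = l)) →
      u i j k + u i j l + v k l i + v k l j ≤ C (i, k) (j, l))
    (perm_bound : ∀ σ : Equiv.Perm (Fin n),
      ∑ i, ∑ j, (u i j (σ i) + u i j (σ j) + v i j (σ⁻¹ i) + v i j (σ⁻¹ j)) ≥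
        ∑ i, ∑ j, C (i, i) (j, j)) :
    SDPFeasible (1 : Matrix (Fin n) (Fin n) ℝ) (vecMulVec (vecM 1) (vecM 1)) ∧
    (∀ X Y, SDPFeasible X Y → ∑ p, ∑ q, C p q * Y p q ≥ ∑ i, ∑ j, C (i, i) (j, j)) ∧
    ∑ p, ∑ q, C p q * vecMulVec (vecM 1) (vecM 1) p q = ∑ i, ∑ j, C (i, i) (j, j) := by
  have cert_le : ∀ p q : Fin n × Fin n, (p.1 = q.1 ↔ p.2 = q.2) → certMatrix u v p q ≤ C p q := by
    intro p q hpq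
    simpa [certMatrix, certBlock, add_assoc] using cert_bound p.1 q.1 p.2 q.2 (by tauto)
  refine ⟨?_, fun X Y h ↦ h.le_sum_mul_of_certMatrix_le cert_le fun σ ↦ ?_, ?_⟩
  · simpa only [permMatrix_one] using sdpFeasible_permMatrix (1 : Equiv.Perm (Fin n))
  · exact sum_certCost_apply_perm u v σ ▸ perm_bound σ
  · simpa only [permMatrix_one, Equiv.Perm.one_apply] using sum_mul_vecMulVec_vecM_permMatrix C 1

end Relaxation

/-- Theorem 1 (master exactness theorem): under the three linear-inequality conditions on
the certificate vectors `u, v`, the pair `(I, vec(I)vec(I)ᵀ)` is optimal for the SDP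
relaxation of the QAP. -/
theorem stmt0 {n : ℕ} (A B : Matrix (Fin n) (Fin n) ℝ)
    (hA : A.IsSymm) (hB : B.IsSymm)
    (u v : Fin n → Fin n → (Fin n → ℝ))
    (h1 : ∀ i j k l, ((i ≠ j ∧ k ≠ l) ∨ (i = j ∧ k = l)) →
      u i j k + u i j l + v k l i + v k l j ≤ A i j * B k l)
    (h2 : ∀ i j, u i j i + u i j j + v i j i + v i j j = A i j * B i j)
    (h3 : ∀ σ : Equiv.Perm (Fin n),
      (∑ i, ∑ j, (u i j (σ i) + u i j (σ j) + v i j (σ⁻¹ i) + v i j (σ⁻¹ j))) ≥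
        ∑ i, ∑ j, A i j * B i j) :
    SDPFeasible (1 : Matrix (Fin n) (Fin n) ℝ)
      (vecMulVec (vecM (1 : Matrix (Fin n) (Fin n) ℝ))
        (vecM (1 : Matrix (Fin n) (Fin n) ℝ))) ∧
    (∀ (X : Matrix (Fin n) (Fin n) ℝ)
        (Y : Matrix (Fin n × Fin n) (Fin n × Fin n) ℝ),
      SDPFeasible X Y → sdpObj A B Y ≥ ∑ i, ∑ j, A i j * B i j) ∧
    sdpObj A B (vecMulVec (vecM (1 : Matrix (Fin n) (Fin n) ℝ))
        (vecM (1 : Matrix (Fin n) (Fin n) ℝ))) = ∑ i, ∑ j, A i j * B i j :=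
  stmt0_general (kron A B) u v h1 h3
end
end

section
/- Let A, B be symmetric n×n real matrices and let x ∈ ℝ^{n²}. Consider the primal problem: minimize ⟨A⊗B, 𝐗⟩ over 𝐗 ∈ ℝ^{n²×n²} subject to 𝐗 − xxᵀ positive semidefinite, Σ_{i,j} 𝐗_{(i,k),(j,l)} = 1 and Σ_{i,j} 𝐗_{(k,i),(l,j)} = 1 for all k,l, 𝐗_{(i,k),(j,k)} = 0 and 𝐗_{(k,i),(k,j)} = 0 for all k and all i ≠ j, and 𝐗 entrywise nonnegative. Consider the dual problem: maximize xᵀ(A⊗B + G⊗E + E⊗H − 𝐙)x − ⟨G + H, E⟩ over G, H ∈ ℝ^{n×n} and 𝐙 ∈ ℝ^{n²×n²} subject to A⊗B + G⊗E + E⊗H − 𝐙 positive semidefinite and 𝐙_{(i,k),(j,l)} ≥ 0 whenever (i ≠ j and k ≠ l) or (i = j and k = l). Then strong duality holds: the infimum of the primal equals the supremum of the dual (as extended real numbers). -/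
open Matrix BigOperators

noncomputable section

/-- The set of primal objective values of the inner SDP (with `x` fixed). -/
def PrimalVals {n : ℕ} (A B : Matrix (Fin n) (Fin n) ℝ)
    (x : Fin n × Fin n → ℝ) : Set ℝ :=
  {r | ∃ Y : Matrix (Fin n × Fin n) (Fin n × Fin n) ℝ,
    (Y - vecMulVec x x).PosSemidef ∧
    (∀ k l, ∑ i, ∑ j, Y (i, k) (j, l) = 1) ∧
    (∀ k l, ∑ i, ∑ j, Y (k, i) (l, j) = 1) ∧
    (∀ k i j, i ≠ j → Y (i, k) (j, k) = 0) ∧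
    (∀ k i j, i ≠ j → Y (k, i) (k, j) = 0) ∧
    (∀ p q, 0 ≤ Y p q) ∧
    (∑ p, ∑ q, kron A B p q * Y p q) = r}

/-- The set of dual objective values. -/
def DualVals {n : ℕ} (A B : Matrix (Fin n) (Fin n) ℝ)
    (x : Fin n × Fin n → ℝ) : Set ℝ :=
  {r | ∃ (G H : Matrix (Fin n) (Fin n) ℝ)
      (Z : Matrix (Fin n × Fin n) (Fin n × Fin n) ℝ),
    (kron A B + kron G (Eall n) + kron (Eall n) H - Z).PosSemidef ∧
    (∀ i j k l, ((i ≠ j ∧ k ≠ l) ∨ (i = j ∧ k = l)) → 0 ≤ Z (i, k) (j, l)) ∧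
    (∑ p, ∑ q, x p * ((kron A B + kron G (Eall n) + kron (Eall n) H - Z) p q) * x q)
      - (∑ i, ∑ j, (G + H) i j * Eall n i j) = r}

/-
Write the dual constraint as `C = P + Z - G ⊗ E - E ⊗ H` with `P` positive semidefinite. The dual
is then a conic program `max e y` over `y ∈ D`, `L y = C`, and the primal is its algebraic dual
`min φ C` over linear functionals `φ` with `e ≤ φ ∘ L` on `D`. Such a pair has no duality gap as
soon as `L` maps the cone `D` onto the whole space, by the M. Riesz extension theorem. Here `L` is
onto for a simple reason: `Z = C + g • (E ⊗ E)` is entrywise nonnegative for large `g`, and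
`C = Z - (g • E) ⊗ E`. Finally, a functional is represented by a matrix `Y` through the trace inner
product; as `C` is symmetric, `Y` may be symmetrized, and self-duality of the positive semidefinite
cone turns the primal constraint into `Y - x xᵀ ⪰ 0`.
-/

open scoped Kronecker

section ConicDuality

variable {E F : Type*} [AddCommGroup E] [Module ℝ E] [AddCommGroup F] [Module ℝ F]

/-- The objective values of the conic program: maximize `e y` over `y ∈ D` with `L y = c`. -/
def conicMaxValues (D : PointedCone ℝ F) (L : F →ₗ[ℝ] E) (e : F →ₗ[ℝ] ℝ) (c : E) : Set ℝ :=
  {r | ∃ y ∈ D, L y = c ∧ e y = r}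

/-- The objective values of the dual of the conic program `conicMaxValues`: minimize `φ c` over the
linear functionals `φ` such that `φ ∘ L - e` is nonnegative on `D`. All functionals are admitted,
without any continuity requirement. -/
def conicMinValues (D : PointedCone ℝ F) (L : F →ₗ[ℝ] E) (e : F →ₗ[ℝ] ℝ) (c : E) : Set ℝ :=
  {r | ∃ φ : E →ₗ[ℝ] ℝ, (∀ y ∈ D, e y ≤ φ (L y)) ∧ φ c = r}

variable {D : PointedCone ℝ F} {L : F →ₗ[ℝ] E} {e : F →ₗ[ℝ] ℝ} {c : E} {d : ℝ}

lemma le_of_mem_conicMaxValues_of_mem_conicMinValues {r s : ℝ}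
    (hs : s ∈ conicMaxValues D L e c) (hr : r ∈ conicMinValues D L e c) : s ≤ r := by
  obtain ⟨y, hy, rfl, rfl⟩ := hs
  obtain ⟨φ, hφ, rfl⟩ := hr
  exact hφ y hy

lemma conicMaxValues_nonempty (hL : Set.SurjOn L D Set.univ) : (conicMaxValues D L e c).Nonempty :=
  have ⟨y, hy, hyc⟩ := hL (Set.mem_univ c)
  ⟨e y, y, hy, hyc, rfl⟩

lemma le_mul_of_map_eq_smul_of_pos (hd : d ∈ upperBounds (conicMaxValues D L e c)) {y : F}
    (hy : y ∈ D) {t : ℝ} (ht : 0 < t) (hyt : L y = t • c) : e y ≤ t * d := by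
  have hfeas : L (t⁻¹ • y) = c := by rw [map_smul, hyt, inv_smul_smul₀ ht.ne']
  have hle : e (t⁻¹ • y) ≤ d := hd ⟨_, D.smul_mem (inv_nonneg.2 ht.le) hy, hfeas, rfl⟩
  rwa [map_smul, smul_eq_mul, inv_mul_le_iff₀ ht] at hle

-- For `t = 0`, `y` is a recession direction of the feasible set, along which `e` cannot grow.
lemma le_mul_of_map_eq_smul (hL : Set.SurjOn L D Set.univ)
    (hd : d ∈ upperBounds (conicMaxValues D L e c)) {y : F} (hy : y ∈ D) {t : ℝ} (ht : 0 ≤ t)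
    (hyt : L y = t • c) : e y ≤ t * d := by
  obtain ⟨_, y₀, hy₀, hy₀c, rfl⟩ := conicMaxValues_nonempty (e := e) (c := c) hL
  have hray (k : ℕ) : k • (e y - t * d) ≤ d - e y₀ := by
    have hmap : L (y₀ + k • y) = (1 + k * t) • c := by
      rw [map_add, map_nsmul, hy₀c, hyt]
      module
    have := le_mul_of_map_eq_smul_of_pos hd (add_mem hy₀ (nsmul_mem hy k)) (by positivity) hmap
    rw [map_add, map_nsmul] at this
    simp only [nsmul_eq_mul] at this ⊢
    linarith
  by_contra! hlt
  obtain ⟨k, hk⟩ := Archimedean.arch (d - e y₀ + 1) (sub_pos.2 hlt)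
  linarith [hray k]

-- The functional `(v, t) ↦ φ v - t` is built by extending `(0, t) ↦ -t`, keeping it nonnegative on
-- the graph of `e` over `D` and at `(-c, -d)`; the latter says that `φ c ≤ d`.
lemma exists_mem_conicMinValues_le (hL : Set.SurjOn L D Set.univ)
    (hd : d ∈ upperBounds (conicMaxValues D L e c)) : ∃ r ∈ conicMinValues D L e c, r ≤ d := by
  let S : PointedCone ℝ (E × ℝ) := D.map (L.prod e) ⊔ PointedCone.hull ℝ {(-c, -d)}
  have hDS {y : F} (hy : y ∈ D) : (L y, e y) ∈ S :=
    Submodule.mem_sup_left (PointedCone.mem_map.2 ⟨y, hy, rfl⟩)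
  have hcS : (-c, -d) ∈ S := Submodule.mem_sup_right (PointedCone.subset_hull rfl)
  let f : E × ℝ →ₗ.[ℝ] ℝ :=
    (-LinearMap.snd ℝ E ℝ).toPMap (LinearMap.ker (LinearMap.fst ℝ E ℝ))
  have hf_nonneg (w : f.domain) (hw : (w : E × ℝ) ∈ S) : 0 ≤ f w := by
    obtain ⟨⟨v, s⟩, rfl : v = 0⟩ := w
    obtain ⟨_, ha, _, hb, hab⟩ := Submodule.mem_sup.1 hw
    obtain ⟨y, hy, rfl⟩ := PointedCone.mem_map.1 ha
    obtain ⟨⟨t, ht⟩, rfl⟩ := Submodule.mem_span_singleton.1 hb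
    obtain ⟨hv, hs⟩ : L y + t • -c = 0 ∧ e y + t * -d = s := Prod.mk.inj hab
    have hyt : L y = t • c := by rwa [smul_neg, add_neg_eq_zero] at hv
    have := le_mul_of_map_eq_smul hL hd hy ht hyt
    change 0 ≤ -s
    linarith
  have hf_dense (w : E × ℝ) : ∃ u : f.domain, (u : E × ℝ) + w ∈ S := by
    obtain ⟨y, hy, hyw⟩ := hL (Set.mem_univ w.1)
    refine ⟨⟨(0, e y - w.2), rfl⟩, ?_⟩
    convert hDS hy using 1
    ext <;> simp [hyw]
  obtain ⟨g, hgf, hgS⟩ := riesz_extension S f hf_nonneg hf_dense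
  have hg (v : E) (s : ℝ) : g (v, s) = g (v, 0) - s := by
    have hs : g (0, s) = -s := hgf ⟨(0, s), rfl⟩
    rw [← add_zero v, ← zero_add s, ← Prod.mk_add_mk, map_add, hs, add_zero, zero_add]
    ring
  refine ⟨g (c, 0), ⟨g.comp (LinearMap.inl ℝ E ℝ), fun y hy ↦ ?_, rfl⟩, ?_⟩
  · have := hgS _ (hDS hy)
    rw [hg] at this
    exact sub_nonneg.1 this
  · have := hgS _ hcS
    rw [← Prod.neg_mk, map_neg, hg] at this
    linarith

theorem sInf_conicMinValues_eq_sSup_conicMaxValues (hL : Set.SurjOn L D Set.univ) :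
    sInf ((fun r : ℝ ↦ (r : EReal)) '' conicMinValues D L e c) =
      sSup ((fun r : ℝ ↦ (r : EReal)) '' conicMaxValues D L e c) := by
  apply le_antisymm
  · refine EReal.le_of_forall_lt_iff_le.1 fun d hd ↦ ?_
    have hbound : d ∈ upperBounds (conicMaxValues D L e c) := fun s hs ↦
      EReal.coe_le_coe_iff.1 ((le_sSup (Set.mem_image_of_mem _ hs)).trans hd.le)
    obtain ⟨r, hr, hrd⟩ := exists_mem_conicMinValues_le hL hbound
    exact (sInf_le (Set.mem_image_of_mem _ hr)).trans (EReal.coe_le_coe_iff.2 hrd)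
  · refine sSup_le ?_
    rintro _ ⟨s, hs, rfl⟩
    refine le_sInf ?_
    rintro _ ⟨r, hr, rfl⟩
    exact EReal.coe_le_coe_iff.2 (le_of_mem_conicMaxValues_of_mem_conicMinValues hs hr)

end ConicDuality

section TraceInner

variable {m n : Type*} [Fintype m] [Fintype n]

/-- The trace inner product `⟨M, N⟩ = ∑ i, ∑ j, M i j * N i j` of real matrices, as a bilinear
map. -/
def traceInner : Matrix m n ℝ →ₗ[ℝ] Matrix m n ℝ →ₗ[ℝ] ℝ :=
  LinearMap.mk₂ ℝ (fun M N ↦ ∑ i, ∑ j, M i j * N i j)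
    (by simp [add_mul, Finset.sum_add_distrib])
    (by simp [Finset.mul_sum, mul_assoc])
    (by simp [mul_add, Finset.sum_add_distrib])
    (by simp [Finset.mul_sum, mul_left_comm])

lemma traceInner_apply (M N : Matrix m n ℝ) : traceInner M N = ∑ i, ∑ j, M i j * N i j := rfl

lemma traceInner_comm (M N : Matrix m n ℝ) : traceInner M N = traceInner N M := by
  simp only [traceInner_apply, mul_comm]

lemma traceInner_transpose_transpose (M N : Matrix m n ℝ) :
    traceInner Mᵀ Nᵀ = traceInner M N :=
  Finset.sum_comm

lemma traceInner_single [DecidableEq m] [DecidableEq n] (M : Matrix m n ℝ) (i : m) (j : n) (a : ℝ) :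
    traceInner M (single i j a) = M i j * a := by
  simp [traceInner_apply, single_apply, ite_and]

lemma exists_traceInner_eq (φ : Matrix m n ℝ →ₗ[ℝ] ℝ) : ∃ M, traceInner M = φ := by
  classical
  refine ⟨of fun i j ↦ φ (single i j 1), ?_⟩
  refine ext_linearMap ℝ fun i j ↦ LinearMap.ext_ring ?_
  simp [traceInner_single]

lemma forall_traceInner_nonneg_iff {M : Matrix m n ℝ} :
    (∀ N, 0 ≤ traceInner M N) ↔ M = 0 := by
  classical
  refine ⟨fun h ↦ ?_, fun h N ↦ by simp [h]⟩
  ext i j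
  have hpos := h (single i j 1)
  have hneg := h (single i j (-1))
  rw [traceInner_single] at hpos hneg
  rw [Matrix.zero_apply]
  linarith

lemma traceInner_symmetrization (M : Matrix m m ℝ) {N : Matrix m m ℝ} (hN : N.IsSymm) :
    traceInner ((2⁻¹ : ℝ) • (M + Mᵀ)) N = traceInner M N := by
  have htr : traceInner Mᵀ N = traceInner M N := by
    rw [← traceInner_transpose_transpose, transpose_transpose, hN.eq]
  rw [map_smul, map_add, LinearMap.smul_apply, LinearMap.add_apply, htr, smul_eq_mul]
  ring

lemma traceInner_vecMulVec (M : Matrix m m ℝ) (v : m → ℝ) :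
    traceInner M (vecMulVec v v) = v ⬝ᵥ M *ᵥ v := by
  simp only [traceInner_apply, vecMulVec_apply, dotProduct, mulVec, Finset.mul_sum]
  exact Finset.sum_congr rfl fun p _ ↦ Finset.sum_congr rfl fun q _ ↦ by ring

-- By the Schur product theorem, as `⟨M, N⟩ = 1ᵀ (M ⊙ N) 1`.
lemma traceInner_nonneg {M N : Matrix m m ℝ} (hM : M.PosSemidef) (hN : N.PosSemidef) :
    0 ≤ traceInner M N := by
  have := (hM.hadamard hN).dotProduct_mulVec_nonneg 1
  simpa [dotProduct, mulVec, traceInner_apply] using this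

lemma posSemidef_iff_forall_traceInner_nonneg {M : Matrix m m ℝ} (hM : M.IsSymm) :
    M.PosSemidef ↔ ∀ N : Matrix m m ℝ, N.PosSemidef → 0 ≤ traceInner M N := by
  refine ⟨fun h N hN ↦ traceInner_nonneg h hN, fun h ↦ ?_⟩
  refine .of_dotProduct_mulVec_nonneg (isHermitian_iff_isSymm.2 hM) fun v ↦ ?_
  rw [star_trivial, ← traceInner_vecMulVec]
  exact h _ (posSemidef_vecMulVec_self_star v)

/-- The cone of positive semidefinite real matrices. -/
def posSemidefCone (m : Type*) : PointedCone ℝ (Matrix m m ℝ) where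
  carrier := {M | M.PosSemidef}
  zero_mem' := .zero
  add_mem' := .add
  smul_mem' a _ hM := hM.smul a.2

lemma mem_posSemidefCone {m : Type*} {M : Matrix m m ℝ} : M ∈ posSemidefCone m ↔ M.PosSemidef :=
  Iff.rfl

end TraceInner

section Marginals

variable {ι κ : Type*} [Fintype ι] [Fintype κ]

/-- The all-ones matrix `E`. -/
def allOnes (ι : Type*) : Matrix ι ι ℝ :=
  of fun _ _ ↦ 1

/-- The matrix of block sums of `Y`, which is adjoint to `G ↦ G ⊗ E`. -/
def fstMarginal (Y : Matrix (ι × κ) (ι × κ) ℝ) : Matrix ι ι ℝ :=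
  of fun i j ↦ ∑ k, ∑ l, Y (i, k) (j, l)

/-- The sum of all blocks of `Y`, which is adjoint to `H ↦ E ⊗ H`. -/
def sndMarginal (Y : Matrix (ι × κ) (ι × κ) ℝ) : Matrix κ κ ℝ :=
  of fun k l ↦ ∑ i, ∑ j, Y (i, k) (j, l)

lemma traceInner_kronecker_allOnes (Y : Matrix (ι × κ) (ι × κ) ℝ) (G : Matrix ι ι ℝ) :
    traceInner Y (G ⊗ₖ allOnes κ) = traceInner (fstMarginal Y) G := by
  simp only [traceInner_apply, Fintype.sum_prod_type, kroneckerMap_apply, allOnes, fstMarginal,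
    of_apply, mul_one, Finset.sum_mul]
  exact Finset.sum_congr rfl fun i _ ↦ Finset.sum_comm

lemma traceInner_allOnes_kronecker (Y : Matrix (ι × κ) (ι × κ) ℝ) (H : Matrix κ κ ℝ) :
    traceInner Y (allOnes ι ⊗ₖ H) = traceInner (sndMarginal Y) H := by
  simp only [traceInner_apply, Fintype.sum_prod_type_right, kroneckerMap_apply, allOnes,
    sndMarginal, of_apply, one_mul, Finset.sum_mul]
  exact Finset.sum_congr rfl fun k _ ↦ Finset.sum_comm

end Marginals

section AssignmentSDP

variable {ι : Type*}

/-- The cone of matrices `Z` with `Z (i, k) (j, l) ≥ 0` at the positions where `i ≠ j` and `k ≠ l`,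
or `i = j` and `k = l`; the entries at all other positions are free. -/
def patternCone (ι : Type*) : PointedCone ℝ (Matrix (ι × ι) (ι × ι) ℝ) where
  carrier := {Z | ∀ i j k l, ((i ≠ j ∧ k ≠ l) ∨ (i = j ∧ k = l)) → 0 ≤ Z (i, k) (j, l)}
  zero_mem' _ _ _ _ _ := le_rfl
  add_mem' hZ hW i j k l h := add_nonneg (hZ i j k l h) (hW i j k l h)
  smul_mem' a _ hZ i j k l h := mul_nonneg a.2 (hZ i j k l h)

/-- The variables `(P, G, H, Z)` of the dual problem, where `P` stands for the slack matrix
`C + G ⊗ E + E ⊗ H - Z`. -/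
abbrev DualVariables (ι : Type*) : Type _ :=
  Matrix (ι × ι) (ι × ι) ℝ × Matrix ι ι ℝ × Matrix ι ι ℝ × Matrix (ι × ι) (ι × ι) ℝ

/-- The cone of dual variables `(P, G, H, Z)` satisfying the conic constraints of the dual problem,
namely `P` positive semidefinite and `Z ∈ patternCone ι`. -/
def dualCone (ι : Type*) : PointedCone ℝ (DualVariables ι) :=
  (posSemidefCone (ι × ι)).prod (Submodule.prod ⊤ (Submodule.prod ⊤ (patternCone ι)))

lemma mem_dualCone {P Z : Matrix (ι × ι) (ι × ι) ℝ} {G H : Matrix ι ι ℝ} :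
    (P, G, H, Z) ∈ dualCone ι ↔ P.PosSemidef ∧ Z ∈ patternCone ι := by
  simp [dualCone, mem_posSemidefCone]

/-- The map `(P, G, H, Z) ↦ P + Z - G ⊗ E - E ⊗ H`, whose value at the variables of the dual
problem is required to be the cost matrix. -/
def costMap (ι : Type*) : DualVariables ι →ₗ[ℝ] Matrix (ι × ι) (ι × ι) ℝ where
  toFun y := y.1 + y.2.2.2 - y.2.1 ⊗ₖ allOnes ι - allOnes ι ⊗ₖ y.2.2.1
  map_add' y z := by
    simp only [Prod.fst_add, Prod.snd_add, add_kronecker, kronecker_add]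
    abel
  map_smul' a y := by
    simp only [Prod.smul_fst, Prod.smul_snd, smul_kronecker, kronecker_smul, smul_sub, smul_add,
      RingHom.id_apply]

lemma costMap_apply (P Z : Matrix (ι × ι) (ι × ι) ℝ) (G H : Matrix ι ι ℝ) :
    costMap ι (P, G, H, Z) = P + Z - G ⊗ₖ allOnes ι - allOnes ι ⊗ₖ H :=
  rfl

lemma costMap_eq_iff {C P Z : Matrix (ι × ι) (ι × ι) ℝ} {G H : Matrix ι ι ℝ} :
    costMap ι (P, G, H, Z) = C ↔ P = C + G ⊗ₖ allOnes ι + allOnes ι ⊗ₖ H - Z := by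
  rw [costMap_apply, sub_eq_iff_eq_add, sub_eq_iff_eq_add, eq_sub_iff_add_eq, add_right_comm]

lemma surjOn_costMap_dualCone [Finite ι] :
    Set.SurjOn (costMap ι) (dualCone ι) Set.univ := by
  intro C _
  obtain ⟨g, hg⟩ := (Set.finite_range fun pq : (ι × ι) × (ι × ι) ↦ -C pq.1 pq.2).bddAbove
  have hshift (p q : ι × ι) : 0 ≤ C p q + g :=
    neg_le_iff_add_nonneg'.1 (hg (Set.mem_range_self (p, q)))
  refine ⟨(0, g • allOnes ι, 0, of fun p q ↦ C p q + g),
    mem_dualCone.2 ⟨.zero, fun i j k l _ ↦ hshift (i, k) (j, l)⟩, ?_⟩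
  ext p q
  simp [costMap_apply, allOnes]

variable [Fintype ι]

/-- The objective `xᵀ P x - ⟨G + H, E⟩` of the dual problem. -/
def dualObjective (x : ι × ι → ℝ) : DualVariables ι →ₗ[ℝ] ℝ :=
  (traceInner (vecMulVec x x)).coprod
    ((-traceInner (allOnes ι)).coprod ((-traceInner (allOnes ι)).coprod 0))

lemma dualObjective_apply (x : ι × ι → ℝ) (P Z : Matrix (ι × ι) (ι × ι) ℝ) (G H : Matrix ι ι ℝ) :
    dualObjective x (P, G, H, Z) =
      (∑ p, ∑ q, x p * P p q * x q) - ∑ i, ∑ j, (G + H) i j * allOnes ι i j := by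
  have hquad : traceInner (vecMulVec x x) P = ∑ p, ∑ q, x p * P p q * x q := by
    simp only [traceInner_apply, vecMulVec_apply, mul_right_comm]
  rw [← hquad, ← traceInner_apply, traceInner_comm _ (allOnes ι), map_add]
  simp only [dualObjective, LinearMap.coprod_apply, LinearMap.neg_apply, LinearMap.zero_apply]
  ring

/-- The linear constraints on the matrix variable `Y` of the primal problem. -/
structure AssignmentConstraints (Y : Matrix (ι × ι) (ι × ι) ℝ) : Prop where
  sum_fst : ∀ k l, ∑ i, ∑ j, Y (i, k) (j, l) = 1
  sum_snd : ∀ k l, ∑ i, ∑ j, Y (k, i) (l, j) = 1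
  fst_eq_zero : ∀ k i j, i ≠ j → Y (i, k) (j, k) = 0
  snd_eq_zero : ∀ k i j, i ≠ j → Y (k, i) (k, j) = 0
  nonneg : ∀ p q, 0 ≤ Y p q

lemma AssignmentConstraints.symmetrization {Y : Matrix (ι × ι) (ι × ι) ℝ}
    (hY : AssignmentConstraints Y) : AssignmentConstraints ((2⁻¹ : ℝ) • (Y + Yᵀ)) where
  sum_fst k l := by
    have htr : ∑ i, ∑ j, Y (j, l) (i, k) = 1 := Finset.sum_comm.trans (hY.sum_fst l k)
    simp only [Matrix.smul_apply, Matrix.add_apply, transpose_apply, smul_eq_mul,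
      ← Finset.mul_sum, Finset.sum_add_distrib, hY.sum_fst, htr]
    norm_num
  sum_snd k l := by
    have htr : ∑ i, ∑ j, Y (l, j) (k, i) = 1 := Finset.sum_comm.trans (hY.sum_snd l k)
    simp only [Matrix.smul_apply, Matrix.add_apply, transpose_apply, smul_eq_mul,
      ← Finset.mul_sum, Finset.sum_add_distrib, hY.sum_snd, htr]
    norm_num
  fst_eq_zero k i j h := by simp [hY.fst_eq_zero k i j h, hY.fst_eq_zero k j i h.symm]
  snd_eq_zero k i j h := by simp [hY.snd_eq_zero k i j h, hY.snd_eq_zero k j i h.symm]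
  nonneg p q := mul_nonneg (by norm_num) (add_nonneg (hY.nonneg p q) (hY.nonneg q p))

lemma forall_mem_patternCone_traceInner_nonneg_iff {Y : Matrix (ι × ι) (ι × ι) ℝ} :
    (∀ Z ∈ patternCone ι, 0 ≤ traceInner Y Z) ↔
      (∀ k i j, i ≠ j → Y (i, k) (j, k) = 0) ∧ (∀ k i j, i ≠ j → Y (k, i) (k, j) = 0) ∧
        ∀ p q, 0 ≤ Y p q := by
  classical
  constructor
  · intro h
    have hnonneg (p q : ι × ι) : 0 ≤ Y p q := by
      have hmem : single p q (1 : ℝ) ∈ patternCone ι := fun i j k l _ ↦ by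
        rw [single_apply]
        positivity
      simpa [traceInner_single] using h _ hmem
    have hzero (i j k l : ι) (hpat : ¬((i ≠ j ∧ k ≠ l) ∨ (i = j ∧ k = l))) :
        Y (i, k) (j, l) = 0 := by
      have hmem : single (i, k) (j, l) (-1 : ℝ) ∈ patternCone ι := fun i' j' k' l' h' ↦ by
        rw [single_apply_of_ne]
        rintro ⟨hik, hjl⟩
        obtain ⟨rfl, rfl⟩ := Prod.mk.inj hik
        obtain ⟨rfl, rfl⟩ := Prod.mk.inj hjl
        exact hpat h'
      have hneg := h _ hmem
      rw [traceInner_single] at hneg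
      linarith [hnonneg (i, k) (j, l)]
    exact ⟨fun k i j hij ↦ hzero i j k k (by simp [hij]),
      fun k i j hij ↦ hzero k k i j (by simp [hij]), hnonneg⟩
  · rintro ⟨hfst, hsnd, hnonneg⟩ Z hZ
    refine Finset.sum_nonneg fun ⟨i, k⟩ _ ↦ Finset.sum_nonneg fun ⟨j, l⟩ _ ↦ ?_
    by_cases hij : i = j <;> by_cases hkl : k = l
    · exact mul_nonneg (hnonneg _ _) (hZ _ _ _ _ (.inr ⟨hij, hkl⟩))
    · rw [← hij, hsnd i k l hkl, zero_mul]
    · rw [← hkl, hfst k i j hij, zero_mul]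
    · exact mul_nonneg (hnonneg _ _) (hZ _ _ _ _ (.inl ⟨hij, hkl⟩))

lemma assignmentConstraints_iff {Y : Matrix (ι × ι) (ι × ι) ℝ} :
    AssignmentConstraints Y ↔ allOnes ι - fstMarginal Y = 0 ∧ allOnes ι - sndMarginal Y = 0 ∧
      ∀ Z ∈ patternCone ι, 0 ≤ traceInner Y Z := by
  rw [forall_mem_patternCone_traceInner_nonneg_iff]
  simp only [sub_eq_zero, ← Matrix.ext_iff, fstMarginal, sndMarginal, allOnes, of_apply,
    eq_comm (a := (1 : ℝ))]
  exact ⟨fun ⟨h₁, h₂, h₃, h₄, h₅⟩ ↦ ⟨h₂, h₁, h₃, h₄, h₅⟩,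
    fun ⟨h₂, h₁, h₃, h₄, h₅⟩ ↦ ⟨h₁, h₂, h₃, h₄, h₅⟩⟩

lemma traceInner_costMap_sub_dualObjective (x : ι × ι → ℝ) (Y P Z : Matrix (ι × ι) (ι × ι) ℝ)
    (G H : Matrix ι ι ℝ) :
    traceInner Y (costMap ι (P, G, H, Z)) - dualObjective x (P, G, H, Z) =
      traceInner (Y - vecMulVec x x) P + traceInner (allOnes ι - fstMarginal Y) G +
        traceInner (allOnes ι - sndMarginal Y) H + traceInner Y Z := by
  simp only [costMap_apply, dualObjective, LinearMap.coprod_apply, LinearMap.neg_apply,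
    LinearMap.zero_apply, map_add, map_sub, LinearMap.sub_apply, traceInner_kronecker_allOnes,
    traceInner_allOnes_kronecker]
  ring

lemma forall_dualObjective_le_traceInner_iff {x : ι × ι → ℝ} {Y : Matrix (ι × ι) (ι × ι) ℝ} :
    (∀ y ∈ dualCone ι, dualObjective x y ≤ traceInner Y (costMap ι y)) ↔
      (∀ P : Matrix (ι × ι) (ι × ι) ℝ, P.PosSemidef → 0 ≤ traceInner (Y - vecMulVec x x) P) ∧
        AssignmentConstraints Y := by
  rw [assignmentConstraints_iff, ← forall_traceInner_nonneg_iff, ← forall_traceInner_nonneg_iff]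
  simp only [Prod.forall, mem_dualCone, ← sub_nonneg (b := dualObjective x _),
    traceInner_costMap_sub_dualObjective]
  refine ⟨fun h ↦ ⟨fun P hP ↦ ?_, fun G ↦ ?_, fun H ↦ ?_, fun Z hZ ↦ ?_⟩, ?_⟩
  · simpa using h P 0 0 0 ⟨hP, zero_mem _⟩
  · simpa using h 0 G 0 0 ⟨.zero, zero_mem _⟩
  · simpa using h 0 0 H 0 ⟨.zero, zero_mem _⟩
  · simpa using h 0 0 0 Z ⟨.zero, hZ⟩
  · rintro ⟨hP, hG, hH, hZ⟩ P G H Z ⟨hPmem, hZmem⟩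
    linarith [hP P hPmem, hG G, hH H, hZ Z hZmem]

/-- The objective values of the primal problem for an arbitrary cost matrix `C` in place of
`A ⊗ B`. -/
def assignmentPrimalValues (C : Matrix (ι × ι) (ι × ι) ℝ) (x : ι × ι → ℝ) : Set ℝ :=
  {r | ∃ Y : Matrix (ι × ι) (ι × ι) ℝ,
    (Y - vecMulVec x x).PosSemidef ∧ AssignmentConstraints Y ∧ traceInner C Y = r}

/-- The objective values of the dual problem for an arbitrary cost matrix `C` in place of
`A ⊗ B`. -/
def assignmentDualValues (C : Matrix (ι × ι) (ι × ι) ℝ) (x : ι × ι → ℝ) : Set ℝ :=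
  {r | ∃ (G H : Matrix ι ι ℝ) (Z : Matrix (ι × ι) (ι × ι) ℝ),
    (C + G ⊗ₖ allOnes ι + allOnes ι ⊗ₖ H - Z).PosSemidef ∧ Z ∈ patternCone ι ∧
    dualObjective x (C + G ⊗ₖ allOnes ι + allOnes ι ⊗ₖ H - Z, G, H, Z) = r}

lemma assignmentDualValues_eq_conicMaxValues (C : Matrix (ι × ι) (ι × ι) ℝ) (x : ι × ι → ℝ) :
    assignmentDualValues C x = conicMaxValues (dualCone ι) (costMap ι) (dualObjective x) C := by
  ext r
  constructor
  · rintro ⟨G, H, Z, hP, hZ, hr⟩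
    exact ⟨_, mem_dualCone.2 ⟨hP, hZ⟩, costMap_eq_iff.2 rfl, hr⟩
  · rintro ⟨⟨P, G, H, Z⟩, hy, hC, hr⟩
    obtain ⟨hP, hZ⟩ := mem_dualCone.1 hy
    obtain rfl := costMap_eq_iff.1 hC
    exact ⟨G, H, Z, hP, hZ, hr⟩

lemma assignmentPrimalValues_eq_conicMinValues {C : Matrix (ι × ι) (ι × ι) ℝ} (hC : C.IsSymm)
    (x : ι × ι → ℝ) :
    assignmentPrimalValues C x = conicMinValues (dualCone ι) (costMap ι) (dualObjective x) C := by
  ext r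
  constructor
  · rintro ⟨Y, hPSD, hY, rfl⟩
    exact ⟨traceInner Y, forall_dualObjective_le_traceInner_iff.2
      ⟨fun P hP ↦ traceInner_nonneg hPSD hP, hY⟩, traceInner_comm Y C⟩
  · rintro ⟨φ, hφ, rfl⟩
    obtain ⟨Y, rfl⟩ := exists_traceInner_eq φ
    obtain ⟨hnonneg, hY⟩ := forall_dualObjective_le_traceInner_iff.1 hφ
    have hsymm : ((2⁻¹ : ℝ) • (Y + Yᵀ) - vecMulVec x x).IsSymm :=
      ((isSymm_add_transpose_self Y).smul _).sub (transpose_vecMulVec x x)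
    refine ⟨(2⁻¹ : ℝ) • (Y + Yᵀ), ?_, hY.symmetrization, ?_⟩
    · refine (posSemidef_iff_forall_traceInner_nonneg hsymm).2 fun P hP ↦ ?_
      have hP_symm : P.IsSymm := isHermitian_iff_isSymm.1 hP.isHermitian
      rw [map_sub, LinearMap.sub_apply, traceInner_symmetrization Y hP_symm]
      simpa using hnonneg P hP
    · rw [traceInner_comm, traceInner_symmetrization Y hC]

theorem stmt5_general {C : Matrix (ι × ι) (ι × ι) ℝ} (hC : C.IsSymm) (x : ι × ι → ℝ) :
    sInf ((fun r : ℝ ↦ (r : EReal)) '' assignmentPrimalValues C x) =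
      sSup ((fun r : ℝ ↦ (r : EReal)) '' assignmentDualValues C x) := by
  rw [assignmentPrimalValues_eq_conicMinValues hC, assignmentDualValues_eq_conicMaxValues]
  exact sInf_conicMinValues_eq_sSup_conicMaxValues surjOn_costMap_dualCone

end AssignmentSDP

section Kron

variable {n : ℕ} {A B : Matrix (Fin n) (Fin n) ℝ}

lemma isSymm_kron (hA : A.IsSymm) (hB : B.IsSymm) : (kron A B).IsSymm :=
  IsSymm.ext fun p q ↦ congrArg₂ (· * ·) (hA.apply p.1 q.1) (hB.apply p.2 q.2)

lemma primalVals_eq_assignmentPrimalValues (x : Fin n × Fin n → ℝ) :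
    PrimalVals A B x = assignmentPrimalValues (kron A B) x := by
  ext r
  exact ⟨fun ⟨Y, hPSD, h₁, h₂, h₃, h₄, h₅, hr⟩ ↦ ⟨Y, hPSD, ⟨h₁, h₂, h₃, h₄, h₅⟩, hr⟩,
    fun ⟨Y, hPSD, ⟨h₁, h₂, h₃, h₄, h₅⟩, hr⟩ ↦ ⟨Y, hPSD, h₁, h₂, h₃, h₄, h₅, hr⟩⟩

lemma dualVals_eq_assignmentDualValues (x : Fin n × Fin n → ℝ) :
    DualVals A B x = assignmentDualValues (kron A B) x := by
  simp only [assignmentDualValues, dualObjective_apply]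
  rfl

end Kron

/-- Proposition 1 (strong duality for the inner SDP, as extended reals). -/
theorem stmt5 {n : ℕ} (A B : Matrix (Fin n) (Fin n) ℝ)
    (hA : A.IsSymm) (hB : B.IsSymm) (x : Fin n × Fin n → ℝ) :
    sInf ((fun r : ℝ => (r : EReal)) '' PrimalVals A B x) =
      sSup ((fun r : ℝ => (r : EReal)) '' DualVals A B x) := by
  rw [primalVals_eq_assignmentPrimalValues, dualVals_eq_assignmentDualValues]
  exact stmt5_general (isSymm_kron hA hB) x
end
end

section
/- Let M = −W + 𝟏pᵀ + q𝟏ᵀ ∈ ℝ^{n×n}, where W is an entrywise nonnegative matrix with zero diagonal and p, q ∈ ℝⁿ. Then M lies in the normal cone of the set of doubly stochastic matrices at the identity: ⟨M, Y − I⟩ ≤ 0 for every doubly stochastic matrix Y ∈ ℝ^{n×n}. -/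
open Matrix BigOperators

noncomputable section

/-! With respect to the trace inner product, `⟨u vᵀ, Y⟩ = uᵀ Y v`. Row and column sums are constant
on doubly stochastic matrices, so the terms `𝟏pᵀ` and `q𝟏ᵀ` are orthogonal to every difference of
two of them. For the remaining term, `⟨-W, Y - X⟩ = ⟨W, X⟩ - ⟨W, Y⟩`, where `⟨W, X⟩ = 0` because `W`
and `X` have disjoint supports (at `X = I`: because `W` has zero diagonal), and `⟨W, Y⟩ ≥ 0`. -/

section TraceInnerProduct

variable {m n R : Type*} [Fintype m] [Fintype n]

theorem trace_mul_transpose_nonneg [Semiring R] [PartialOrder R] [IsOrderedRing R]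
    {A B : Matrix m n R} (hA : ∀ i j, 0 ≤ A i j) (hB : ∀ i j, 0 ≤ B i j) :
    0 ≤ trace (A * Bᵀ) :=
  Finset.sum_nonneg fun i _ => Finset.sum_nonneg fun j _ => mul_nonneg (hA i j) (hB i j)

theorem trace_mul_transpose_eq_zero_of_hadamard_eq_zero [NonUnitalSemiring R] {A B : Matrix m n R}
    (h : A ⊙ B = 0) : trace (A * Bᵀ) = 0 := by
  rw [← sum_hadamard_eq, h]
  simp only [Matrix.zero_apply, Finset.sum_const_zero]

theorem trace_vecMulVec_mul_transpose [CommSemiring R] (u : m → R) (v : n → R)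
    (Z : Matrix m n R) : trace (vecMulVec u v * Zᵀ) = u ⬝ᵥ Z *ᵥ v := by
  rw [vecMulVec_mul, trace_vecMulVec, vecMul_transpose]

end TraceInnerProduct

/-- The normal cone of a set `C` of matrices at `X`, used here for the set of doubly stochastic
matrices. The trace inner product `⟨M, N⟩` is written `trace (M * Nᵀ)`; neither convexity of `C` nor
`X ∈ C` is built in. -/
def normalCone {m n R : Type*} [Fintype m] [Fintype n] [Ring R] [LE R]
    (C : Set (Matrix m n R)) (X : Matrix m n R) : Set (Matrix m n R) :=
  {M | ∀ Y ∈ C, trace (M * (Y - X)ᵀ) ≤ 0}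

section NormalCone

variable {m n R : Type*} [Fintype m] [Fintype n] {C : Set (Matrix m n R)} {X : Matrix m n R}

theorem add_mem_normalCone [Ring R] [PartialOrder R] [IsOrderedRing R] {M N : Matrix m n R}
    (hM : M ∈ normalCone C X) (hN : N ∈ normalCone C X) : M + N ∈ normalCone C X := by
  intro Y hY
  rw [Matrix.add_mul, trace_add]
  exact add_nonpos (hM Y hY) (hN Y hY)

theorem neg_mem_normalCone [Ring R] [PartialOrder R] [IsOrderedRing R] {W : Matrix m n R}
    (hC : ∀ Y ∈ C, ∀ i j, 0 ≤ Y i j) (hW : ∀ i j, 0 ≤ W i j) (hWX : W ⊙ X = 0) :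
    -W ∈ normalCone C X := by
  intro Y hY
  calc trace (-W * (Y - X)ᵀ)
      = trace (W * Xᵀ) - trace (W * Yᵀ) := by
        rw [transpose_sub, Matrix.neg_mul, ← Matrix.mul_neg, neg_sub, Matrix.mul_sub, trace_sub]
    _ = -trace (W * Yᵀ) := by rw [trace_mul_transpose_eq_zero_of_hadamard_eq_zero hWX, zero_sub]
    _ ≤ 0 := neg_nonpos.2 (trace_mul_transpose_nonneg hW (hC Y hY))

theorem vecMulVec_mem_normalCone_iff [CommRing R] [PartialOrder R] [IsOrderedRing R]
    {u : m → R} {v : n → R} :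
    vecMulVec u v ∈ normalCone C X ↔ ∀ Y ∈ C, u ⬝ᵥ Y *ᵥ v ≤ u ⬝ᵥ X *ᵥ v := by
  simp only [normalCone, Set.mem_ofPred_eq, trace_vecMulVec_mul_transpose, sub_mulVec,
    dotProduct_sub, sub_nonpos]

end NormalCone

section DoublyStochastic

variable {ι R : Type*} [Fintype ι] [DecidableEq ι] [CommRing R] [PartialOrder R] [IsOrderedRing R]
  {X : Matrix ι ι R}

theorem one_vecMulVec_mem_normalCone (hX : X ∈ doublyStochastic R ι) (p : ι → R) :
    vecMulVec 1 p ∈ normalCone (doublyStochastic R ι : Set (Matrix ι ι R)) X := by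
  refine vecMulVec_mem_normalCone_iff.2 fun Y hY => le_of_eq ?_
  rw [dotProduct_mulVec, dotProduct_mulVec, one_vecMul_of_mem_doublyStochastic hY,
    one_vecMul_of_mem_doublyStochastic hX]

theorem vecMulVec_one_mem_normalCone (hX : X ∈ doublyStochastic R ι) (q : ι → R) :
    vecMulVec q 1 ∈ normalCone (doublyStochastic R ι : Set (Matrix ι ι R)) X := by
  refine vecMulVec_mem_normalCone_iff.2 fun Y hY => le_of_eq ?_
  rw [mulVec_one_of_mem_doublyStochastic hY, mulVec_one_of_mem_doublyStochastic hX]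

theorem stmt15_general (hX : X ∈ doublyStochastic R ι) {W : Matrix ι ι R}
    (hW : ∀ i j, 0 ≤ W i j) (hWX : W ⊙ X = 0) (p q : ι → R) :
    -W + vecMulVec 1 p + vecMulVec q 1 ∈
      normalCone (doublyStochastic R ι : Set (Matrix ι ι R)) X :=
  have hneg := neg_mem_normalCone (fun _ hY _ _ => nonneg_of_mem_doublyStochastic hY) hW hWX
  add_mem_normalCone (add_mem_normalCone hneg (one_vecMulVec_mem_normalCone hX p))
    (vecMulVec_one_mem_normalCone hX q)

end DoublyStochastic

theorem DS.mem_doublyStochastic {n : ℕ} {X : Matrix (Fin n) (Fin n) ℝ} (hX : DS X) :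
    X ∈ doublyStochastic ℝ (Fin n) :=
  mem_doublyStochastic_iff_sum.2 ⟨hX.2.2, hX.1, hX.2.1⟩

/-- Lemma 3: `M = −W + 𝟏pᵀ + q𝟏ᵀ` lies in the normal cone of the doubly stochastic
matrices at the identity. -/
theorem stmt15 {n : ℕ} (W : Matrix (Fin n) (Fin n) ℝ)
    (hW0 : ∀ i j, 0 ≤ W i j) (hWdiag : ∀ i, W i i = 0)
    (p q : Fin n → ℝ) :
    ∀ Y : Matrix (Fin n) (Fin n) ℝ, DS Y →
      ∑ i, ∑ j,
        ((-W + vecMulVec (fun _ => (1 : ℝ)) p + vecMulVec q (fun _ => (1 : ℝ)) :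
            Matrix (Fin n) (Fin n) ℝ)) i j *
          (Y - 1) i j ≤ 0 := by
  intro Y hY
  -- The double sum is `trace (M * (Y - 1)ᵀ)` by definition, cf. `Matrix.sum_hadamard_eq`.
  exact stmt15_general (one_mem _) hW0 (hadamard_one_eq_zero_iff.2 (funext hWdiag)) p q Y
    hY.mem_doublyStochastic
end
end

section
/- Let A, B be symmetric n×n real matrices and let (X, 𝐗) be any feasible pair of the SDP relaxation. Then the marginal-sum identities hold: Σ_i 𝐗_{(i,j),(k,l)} = X_{kl} and Σ_i 𝐗_{(j,i),(k,l)} = X_{kl} for all j, k, l ∈ [n]. -/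
open Matrix BigOperators

noncomputable section

/-!
Let `w` be the indicator vector of a row or of a column of the `n × n` index grid, and put
`M = 𝐗 - vec(X) vec(X)ᵀ`. The sum constraints on `𝐗` and the double stochasticity of `X` give
`wᵀ M w = 1 - 1² = 0`. Since `M` is positive semidefinite, `wᵀ M = 0`, that is,
`wᵀ 𝐗 = (wᵀ vec(X)) vec(X)ᵀ = vec(X)ᵀ`, which read entrywise gives the marginal-sum identities.
-/

section RankOneDomination

open scoped ComplexOrder

variable {𝕜 ι κ m n : Type*} [RCLike 𝕜] [Fintype κ] [Fintype m] [Fintype n]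

lemma star_vecMul_eq_smul_of_posSemidef_sub_vecMulVec [Fintype ι] {Y : Matrix ι ι 𝕜}
    {x w : ι → 𝕜} (hY : (Y - vecMulVec x (star x)).PosSemidef)
    (hw : star w ⬝ᵥ (Y *ᵥ w) = (star w ⬝ᵥ x) * (star x ⬝ᵥ w)) :
    star w ᵥ* Y = (star w ⬝ᵥ x) • star x := by
  have hquad : star w ⬝ᵥ ((Y - vecMulVec x (star x)) *ᵥ w) = 0 := by
    rw [sub_mulVec, dotProduct_sub, hw, vecMulVec_mulVec, op_smul_eq_smul, dotProduct_smul,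
      smul_eq_mul, mul_comm, sub_self]
  have hker : (Y - vecMulVec x (star x)) *ᵥ w = 0 := (hY.dotProduct_mulVec_zero_iff w).1 hquad
  have hcoker : star w ᵥ* (Y - vecMulVec x (star x)) = 0 := by
    rw [← hY.isHermitian.eq, ← star_mulVec, hker, star_zero]
  rwa [vecMul_sub, vecMul_vecMulVec, sub_eq_zero] at hcoker

lemma sum_apply_eq_mul_star_of_posSemidef_sub_vecMulVec {Y : Matrix ι ι 𝕜} {x : ι → 𝕜}
    (hY : (Y - vecMulVec x (star x)).PosSemidef) (f : κ → ι)
    (hf : ∑ a, ∑ b, Y (f a) (f b) = (∑ a, x (f a)) * star (∑ a, x (f a))) (q : ι) :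
    ∑ a, Y (f a) q = (∑ a, x (f a)) * star (x q) := by
  -- Restricting the matrix to the indices `f a` and `q` makes the index type finite and turns the
  -- sum over `f` into a pairing with a 0-1 vector, whether or not `f` is injective.
  let g : κ ⊕ Unit → ι := Sum.elim f fun _ => q
  let w : κ ⊕ Unit → 𝕜 := Sum.elim 1 0
  have star_w : star w = w := by ext (_ | _) <;> simp [w]
  have w_dotProduct (v : κ ⊕ Unit → 𝕜) : w ⬝ᵥ v = ∑ a, v (.inl a) := by simp [w, dotProduct]
  have hYg : (Y.submatrix g g - vecMulVec (x ∘ g) (star (x ∘ g))).PosSemidef := hY.submatrix g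
  have hquad : star w ⬝ᵥ (Y.submatrix g g *ᵥ w) =
      (star w ⬝ᵥ (x ∘ g)) * (star (x ∘ g) ⬝ᵥ w) := by
    rw [star_sum] at hf
    simp only [star_w, mulVec, dotProduct_comm _ w, w_dotProduct]
    exact hf
  have hcol := congr_fun (star_vecMul_eq_smul_of_posSemidef_sub_vecMulVec hYg hquad) (.inr ())
  simp only [star_w, vecMul, Pi.smul_apply, smul_eq_mul, w_dotProduct] at hcol
  exact hcol

lemma sum_apply_eq_star_of_posSemidef_sub_vecMulVec {Y : Matrix ι ι 𝕜} {x : ι → 𝕜}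
    (hY : (Y - vecMulVec x (star x)).PosSemidef) (f : κ → ι)
    (hYf : ∑ a, ∑ b, Y (f a) (f b) = 1) (hxf : ∑ a, x (f a) = 1) (q : ι) :
    ∑ a, Y (f a) q = star (x q) := by
  have hf : ∑ a, ∑ b, Y (f a) (f b) = (∑ a, x (f a)) * star (∑ a, x (f a)) := by
    rw [hYf, hxf, star_one, one_mul]
  rw [sum_apply_eq_mul_star_of_posSemidef_sub_vecMulVec hY f hf, hxf, one_mul]

theorem stmt16_general {Y : Matrix (m × n) (m × n) 𝕜} {x : m × n → 𝕜}
    (hY : (Y - vecMulVec x (star x)).PosSemidef)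
    (hYcol : ∀ l, ∑ i, ∑ j, Y (i, l) (j, l) = 1) (hYrow : ∀ k, ∑ i, ∑ j, Y (k, i) (k, j) = 1)
    (hxcol : ∀ l, ∑ i, x (i, l) = 1) (hxrow : ∀ k, ∑ i, x (k, i) = 1) (q : m × n) :
    (∀ l, ∑ i, Y (i, l) q = star (x q)) ∧ (∀ k, ∑ i, Y (k, i) q = star (x q)) :=
  ⟨fun l => sum_apply_eq_star_of_posSemidef_sub_vecMulVec hY (·, l) (hYcol l) (hxcol l) q,
    fun k => sum_apply_eq_star_of_posSemidef_sub_vecMulVec hY (k, ·) (hYrow k) (hxrow k) q⟩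

end RankOneDomination

/-- Proposition 8 (marginal-sum identities) for any feasible pair of the SDP
relaxation. -/
theorem stmt16 {n : ℕ} (A B : Matrix (Fin n) (Fin n) ℝ)
    (hA : A.IsSymm) (hB : B.IsSymm)
    (X : Matrix (Fin n) (Fin n) ℝ)
    (Y : Matrix (Fin n × Fin n) (Fin n × Fin n) ℝ)
    (hfeas : SDPFeasible X Y) :
    ∀ j k l, (∑ i, Y (i, j) (k, l) = X k l) ∧ (∑ i, Y (j, i) (k, l) = X k l) := by
  obtain ⟨hY, hYcol, hYrow, -, -, -, hXrow, hXcol, -⟩ := hfeas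
  intro j k l
  have h := stmt16_general (x := vecM X) hY (fun l => hYcol l l) (fun k => hYrow k k) hXcol hXrow
    (k, l)
  exact ⟨h.1 j, h.2 j⟩
end
end
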